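/- (Proposition 1, consequence along the threshold curve.) Under the hypotheses of Proposition 1 (continuous margins F_j of X; multivariate regular variation of V = (1/(1−F_j(X_j)))_j with exponent measure ν satisfying ν(𝕃₁) > 0, ν(∂𝕃₁) = 0 and ν({x : x_j = 0 for some j}) = 0; and the marginal limit (b_j(ty) − b_j(t))/a_j(t) → (y^{ξ_j} − 1)/ξ_j for all y > 0), define σ_j(u) = a_j(1/(1 − F_j(u))) for u with F_j(u) < 1, and the excess vector Y_{u(t)} = X − b(t) conditional on X ≰ b(t). Then the conditional law of ((X_j − b_j(t))/σ_j(b_j(t)))_{j=1}^d given X ≰ b(t) converges weakly, as t → ∞, to the law of ((Y_j^{ξ_j} − 1)/ξ_j)_{j=1}^d, where Y has law P(Y ∈ B) = ν(B ∩ 𝕃₁)/ν(𝕃₁). -/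

import Mathlib

open MeasureTheory Filter Set

/-!
Put `V` for the vector `X` on the standard Pareto scale. By the portmanteau theorem, regular
variation makes `t⁻¹ V` given `t⁻¹ V ∈ 𝕃₁` converge in distribution to `ν(· ∩ 𝕃₁) / ν(𝕃₁)`. Since
`b_j(V_j) = X_j` almost surely, the normalised excess over `b(t)` is almost surely `g_t (t⁻¹ V)`,
where `g_t(y)_j = (b_j(t y_j) - b_j(t)) / a_j(t)`, and `X ≰ b(t)` is almost surely the event
`t⁻¹ V ∈ 𝕃₁`. Monotonicity of `b_j` upgrades the pointwise convergence of `g_t` to continuous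
convergence at every point with positive coordinates, and such points carry the limit law; the
extended continuous mapping theorem concludes.
-/

section

open ProbabilityTheory Function Topology

section Conditioning

lemma measureReal_cond {Ω : Type*} [MeasurableSpace Ω] {B : Set Ω} (hB : MeasurableSet B)
    (μ : Measure Ω) (A : Set Ω) : μ[|A].real B = (μ.real A)⁻¹ * μ.real (A ∩ B) := by
  simp only [measureReal_def, cond_apply' hB, ENNReal.toReal_mul, ENNReal.toReal_inv]

lemma measureReal_ne_zero_of_cond {Ω : Type*} [MeasurableSpace Ω] {μ : Measure Ω} {A : Set Ω}
    [IsProbabilityMeasure (μ[|A])] : μ.real A ≠ 0 := by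
  obtain ⟨h_top, h0⟩ := not_or.1 (mt cond_eq_zero.2 (IsProbabilityMeasure.ne_zero (μ[|A])))
  exact ENNReal.toReal_ne_zero.2 ⟨h0, h_top⟩

lemma cond_congr_set {Ω : Type*} [MeasurableSpace Ω] {μ : Measure Ω} {A B : Set Ω}
    (h : A =ᵐ[μ] B) : μ[|A] = μ[|B] := by
  rw [ProbabilityTheory.cond, ProbabilityTheory.cond, measure_congr h, Measure.restrict_congr_set h]

lemma integral_cond {Ω E : Type*} [MeasurableSpace Ω] [NormedAddCommGroup E] [NormedSpace ℝ E]
    (μ : Measure Ω) (s : Set Ω) (f : Ω → E) :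
    ∫ ω, f ω ∂μ[|s] = (μ.real s)⁻¹ • ∫ ω in s, f ω ∂μ := by
  rw [ProbabilityTheory.cond, integral_smul_measure, ENNReal.toReal_inv, measureReal_def]

variable {ι E : Type*} {l : Filter ι} {Ω : ι → Type*} [∀ i, MeasurableSpace (Ω i)]
  {P : ∀ i, Measure (Ω i)}

lemma tendsto_cond_measureReal {A : ∀ i, Set (Ω i)} {B : ∀ i, Set (Ω i)} {c : ι → ℝ} {p q : ℝ}
    (hB : ∀ i, MeasurableSet (B i)) (hp : p ≠ 0)
    (hA_lim : Tendsto (fun i ↦ c i * (P i).real (A i)) l (𝓝 p))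
    (hAB_lim : Tendsto (fun i ↦ c i * (P i).real (A i ∩ B i)) l (𝓝 q)) :
    Tendsto (fun i ↦ ((P i)[|A i]).real (B i)) l (𝓝 (p⁻¹ * q)) := by
  refine ((hA_lim.inv₀ hp).mul hAB_lim).congr' ?_
  filter_upwards [hA_lim.eventually_ne hp] with i hi
  have hc : c i ≠ 0 := left_ne_zero_of_mul hi
  rw [measureReal_cond (hB i), mul_inv, mul_mul_mul_comm, inv_mul_cancel₀ hc, one_mul]

lemma tendstoInDistribution_cond [TopologicalSpace E] [TopologicalSpace.PseudoMetrizableSpace E]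
    [MeasurableSpace E] [OpensMeasurableSpace E] [l.IsCountablyGenerated] {Z : ∀ i, Ω i → E}
    {A : ∀ i, Set (Ω i)} {c : ι → ℝ} {ν : Measure E} {L : Set E}
    [∀ i, IsProbabilityMeasure ((P i)[|A i])] [IsProbabilityMeasure (ν[|L])]
    (hZ : ∀ i, Measurable (Z i))
    (hlim : ∀ B, MeasurableSet B → ν[|L] (frontier B) = 0 →
      Tendsto (fun i ↦ c i * (P i).real (A i ∩ Z i ⁻¹' B)) l (𝓝 (ν.real (L ∩ B)))) :
    TendstoInDistribution Z l id (fun i ↦ (P i)[|A i]) (ν[|L]) where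
  forall_aemeasurable i := (hZ i).aemeasurable
  aemeasurable_limit := aemeasurable_id
  tendsto := by
    have := fun i ↦ Measure.isProbabilityMeasure_map (hZ i).aemeasurable (μ := (P i)[|A i])
    refine tendsto_of_forall_isOpen_le_liminf' ?_
    simp only [ProbabilityMeasure.coe_mk, Measure.map_id]
    refine le_liminf_measure_open_of_forall_tendsto_measure fun {B} hB hB_bd ↦ ?_
    have hA_lim := hlim univ .univ (by simp)
    simp only [preimage_univ, inter_univ] at hA_lim
    rw [← ENNReal.tendsto_toReal_iff (by simp) (by simp)]
    simpa only [Measure.map_apply (hZ _) hB, ← measureReal_def, measureReal_cond hB]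
      using tendsto_cond_measureReal (fun i ↦ hZ i hB) measureReal_ne_zero_of_cond hA_lim
        (hlim B hB hB_bd)

end Conditioning

section WeakConvergence

variable {ι E E' Ω' : Type*} {l : Filter ι} {Ω : ι → Type*} [∀ i, MeasurableSpace (Ω i)]
  {P : ∀ i, Measure (Ω i)} [∀ i, IsProbabilityMeasure (P i)]
  [MeasurableSpace Ω'] {P' : Measure Ω'} [IsProbabilityMeasure P']
  [TopologicalSpace E] [MeasurableSpace E] [OpensMeasurableSpace E]
  {Z : ∀ i, Ω i → E} {Z' : Ω' → E}

lemma measure_preimage_open_le_liminf [HasOuterApproxClosed E]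
    (hZ : TendstoInDistribution Z l Z' P P') {U : Set E} (hU : IsOpen U) :
    P' (Z' ⁻¹' U) ≤ l.liminf fun i ↦ P i (Z i ⁻¹' U) := by
  have h := ProbabilityMeasure.le_liminf_measure_open_of_tendsto hZ.tendsto hU
  simpa only [ProbabilityMeasure.coe_mk, Measure.map_apply_of_aemeasurable hZ.aemeasurable_limit
    hU.measurableSet, Measure.map_apply_of_aemeasurable (hZ.forall_aemeasurable _)
    hU.measurableSet] using h

lemma measure_preimage_le_liminf_of_tendsto_uncurry [HasOuterApproxClosed E]
    [l.IsCountablyGenerated] [TopologicalSpace E'] {f : ι → E → E'} {g : E → E'}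
    (hZ : TendstoInDistribution Z l Z' P P')
    (hfg : ∀ᵐ ω ∂P', Tendsto (uncurry f) (l ×ˢ 𝓝 (Z' ω)) (𝓝 (g (Z' ω))))
    {G : Set E'} (hG : IsOpen G) :
    P' ((g ∘ Z') ⁻¹' G) ≤ l.liminf fun i ↦ P i ((f i ∘ Z i) ⁻¹' G) := by
  obtain ⟨s, hs⟩ := l.exists_antitone_basis
  -- Continuous convergence puts almost every point that `g` maps into `G` in some `U n`.
  let U (n : ℕ) : Set E := interior {y | ∀ i ∈ s n, f i y ∈ G}
  have hU_mono : Monotone U := fun m n hmn ↦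
    interior_mono fun y hy i hi ↦ hy i (hs.antitone hmn hi)
  have hU_cover : (g ∘ Z') ⁻¹' G ≤ᵐ[P'] ⋃ n, Z' ⁻¹' U n := by
    filter_upwards [hfg] with ω hω hgω
    obtain ⟨I, hI, W, hW, hIW⟩ := mem_prod_iff.1 (hω (hG.mem_nhds hgω))
    obtain ⟨n, hn⟩ := hs.mem_iff.1 hI
    exact mem_iUnion.2 ⟨n, mem_interior_iff_mem_nhds.2 <|
      mem_of_superset hW fun y hy i hi ↦ hIW (mk_mem_prod (hn hi) hy)⟩
  calc P' ((g ∘ Z') ⁻¹' G)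
      ≤ P' (⋃ n, Z' ⁻¹' U n) := measure_mono_ae hU_cover
    _ = ⨆ n, P' (Z' ⁻¹' U n) :=
        Monotone.measure_iUnion fun m n hmn ↦ preimage_mono (hU_mono hmn)
    _ ≤ l.liminf fun i ↦ P i ((f i ∘ Z i) ⁻¹' G) := iSup_le fun n ↦ ?_
  refine (measure_preimage_open_le_liminf hZ isOpen_interior).trans ?_
  refine liminf_le_liminf ?_
  filter_upwards [hs.mem n] with i hi
  exact measure_mono fun ω hω ↦ interior_subset hω i hi

lemma tendstoInDistribution_comp_of_tendsto_uncurry [HasOuterApproxClosed E]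
    [l.IsCountablyGenerated] [TopologicalSpace E'] [MeasurableSpace E'] [OpensMeasurableSpace E']
    {f : ι → E → E'} {g : E → E'} (hZ : TendstoInDistribution Z l Z' P P')
    (hf : ∀ i, AEMeasurable (f i ∘ Z i) (P i)) (hg : AEMeasurable (g ∘ Z') P')
    (hfg : ∀ᵐ ω ∂P', Tendsto (uncurry f) (l ×ˢ 𝓝 (Z' ω)) (𝓝 (g (Z' ω)))) :
    TendstoInDistribution (fun i ↦ f i ∘ Z i) l (g ∘ Z') P P' where
  forall_aemeasurable := hf
  aemeasurable_limit := hg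
  tendsto := tendsto_of_forall_isOpen_le_liminf' fun G hG ↦ by
    simpa only [ProbabilityMeasure.coe_mk, Measure.map_apply_of_aemeasurable hg hG.measurableSet,
      Measure.map_apply_of_aemeasurable (hf _) hG.measurableSet]
      using measure_preimage_le_liminf_of_tendsto_uncurry hZ hfg hG

lemma tendsto_integral_of_tendstoInDistribution (hZ : TendstoInDistribution Z l Z' P P')
    (h : BoundedContinuousFunction E ℝ) :
    Tendsto (fun i ↦ ∫ ω, h (Z i ω) ∂P i) l (𝓝 (∫ ω, h (Z' ω) ∂P')) := by
  have h_map := ProbabilityMeasure.tendsto_iff_forall_integral_tendsto.1 hZ.tendsto h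
  simpa only [ProbabilityMeasure.coe_mk,
    integral_map hZ.aemeasurable_limit h.continuous.aestronglyMeasurable,
    integral_map (hZ.forall_aemeasurable _) h.continuous.aestronglyMeasurable] using h_map

end WeakConvergence

lemma tendsto_uncurry_of_monotoneOn {ι α β : Type*} {l : Filter ι}
    [LinearOrder α] [TopologicalSpace α] [OrderTopology α] [DenselyOrdered α] [NoMinOrder α]
    [NoMaxOrder α] [LinearOrder β] [TopologicalSpace β] [OrderTopology β]
    {f : ι → α → β} {φ : α → β} {s : Set α} {x : α} (hs : s ∈ 𝓝 x)
    (hf : ∀ᶠ i in l, MonotoneOn (f i) s) (hlim : ∀ y ∈ s, Tendsto (f · y) l (𝓝 (φ y)))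
    (hφ : ContinuousAt φ x) : Tendsto (uncurry f) (l ×ˢ 𝓝 x) (𝓝 (φ x)) := by
  refine tendsto_order.2 ⟨fun c hc ↦ ?_, fun c hc ↦ ?_⟩
  · obtain ⟨y, ⟨hys, hyc⟩, hyx⟩ : ∃ y, (y ∈ s ∧ c < φ y) ∧ y < x :=
      (((eventually_mem_set.2 hs).and (hφ.eventually (lt_mem_nhds hc))).filter_mono
        nhdsWithin_le_nhds).and (self_mem_nhdsWithin (s := Iio x)) |>.exists
    have hi : ∀ᶠ i in l, MonotoneOn (f i) s ∧ c < f i y :=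
      hf.and ((hlim y hys).eventually (lt_mem_nhds hyc))
    filter_upwards [hi.prod_mk ((eventually_mem_set.2 hs).and (lt_mem_nhds hyx))]
      with ⟨i, z⟩ ⟨⟨hmono, hc⟩, hzs, hyz⟩
    exact hc.trans_le (hmono hys hzs hyz.le)
  · obtain ⟨y, ⟨hys, hyc⟩, hyx⟩ : ∃ y, (y ∈ s ∧ φ y < c) ∧ x < y :=
      (((eventually_mem_set.2 hs).and (hφ.eventually (gt_mem_nhds hc))).filter_mono
        nhdsWithin_le_nhds).and (self_mem_nhdsWithin (s := Ioi x)) |>.exists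
    have hi : ∀ᶠ i in l, MonotoneOn (f i) s ∧ f i y < c :=
      hf.and ((hlim y hys).eventually (gt_mem_nhds hyc))
    filter_upwards [hi.prod_mk ((eventually_mem_set.2 hs).and (gt_mem_nhds hyx))]
      with ⟨i, z⟩ ⟨⟨hmono, hc⟩, hzs, hyz⟩
    exact (hmono hzs hys hyz.le).trans_lt hc

lemma tendsto_uncurry_pi {ι κ α : Type*} {β γ : ι → Type*} [∀ j, TopologicalSpace (β j)]
    [∀ j, TopologicalSpace (γ j)] {l : Filter κ} {u : Filter α} {τ : κ → α}
    {f : ∀ j, α → β j → γ j} {y : ∀ j, β j} {z : ∀ j, γ j}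
    (hf : ∀ j, Tendsto (uncurry (f j)) (u ×ˢ 𝓝 (y j)) (𝓝 (z j))) (hτ : Tendsto τ l u) :
    Tendsto (uncurry fun i x j ↦ f j (τ i) (x j)) (l ×ˢ 𝓝 y) (𝓝 z) :=
  tendsto_pi_nhds.2 fun j ↦ (hf j).comp (hτ.prodMap (continuous_apply j).continuousAt)

/-- The paper's `b`: the tail quantile function `t ↦ inf {x | F x ≥ 1 - 1 / t}` of the distribution
with distribution function `F = cdf μ`. -/
noncomputable def tailQuantile (μ : Measure ℝ) (t : ℝ) : ℝ := sInf {x | 1 - 1 / t ≤ cdf μ x}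

/-- The transformation `x ↦ 1 / (1 - F x)`, `F = cdf μ`, to the standard Pareto scale. Where
`F x = 1` its value is the junk value `0`. -/
noncomputable def paretoTransform (μ : Measure ℝ) (x : ℝ) : ℝ := 1 / (1 - cdf μ x)

section TailQuantile

variable {μ : Measure ℝ} {t x : ℝ}

lemma tailQuantile_le_iff (ht : 1 < t) : tailQuantile μ t ≤ x ↔ 1 - 1 / t ≤ cdf μ x := by
  have ht_pos : 0 < 1 / t := by positivity
  have ht_lt : 1 / t < 1 := (div_lt_one (by positivity)).2 ht
  obtain ⟨u, hu⟩ := ((tendsto_cdf_atBot μ).eventually (gt_mem_nhds (sub_pos.2 ht_lt))).exists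
  obtain ⟨v, hv⟩ := ((tendsto_cdf_atTop μ).eventually (lt_mem_nhds (sub_lt_self 1 ht_pos))).exists
  have h_bdd : BddBelow {x | 1 - 1 / t ≤ cdf μ x} :=
    ⟨u, fun x hx ↦ ((monotone_cdf μ).reflect_lt (hu.trans_le hx)).le⟩
  refine ⟨fun hx ↦ ?_, fun hx ↦ csInf_le h_bdd hx⟩
  have h_right : ∀ y > x, 1 - 1 / t ≤ cdf μ y := fun y hy ↦ by
    obtain ⟨z, hz, hzy⟩ := exists_lt_of_csInf_lt ⟨v, hv.le⟩ (hx.trans_lt hy)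
    exact hz.trans (monotone_cdf μ hzy.le)
  exact ge_of_tendsto (((cdf μ).right_continuous x).mono Ioi_subset_Ici_self)
    (eventually_nhdsWithin_of_forall h_right)

lemma monotoneOn_tailQuantile (μ : Measure ℝ) : MonotoneOn (tailQuantile μ) (Ioi 1) := by
  intro s hs t ht hst
  have hs0 : (0 : ℝ) < s := zero_lt_one.trans hs
  rw [tailQuantile_le_iff hs]
  calc 1 - 1 / s ≤ 1 - 1 / t := sub_le_sub_left (one_div_le_one_div_of_le hs0 hst) 1
    _ ≤ cdf μ (tailQuantile μ t) := (tailQuantile_le_iff ht).1 le_rfl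

lemma cdf_tailQuantile (hμ : Continuous (cdf μ)) (ht : 1 < t) :
    cdf μ (tailQuantile μ t) = 1 - 1 / t := by
  refine le_antisymm ?_ ((tailQuantile_le_iff ht).1 le_rfl)
  refine le_of_tendsto (hμ.continuousWithinAt (s := Iio (tailQuantile μ t))) ?_
  filter_upwards [self_mem_nhdsWithin] with y hy
  exact (not_le.1 <| mt (tailQuantile_le_iff ht).2 (not_le.2 hy)).le

lemma cdf_tailQuantile_lt_one (hμ : Continuous (cdf μ)) (ht : 1 < t) :
    cdf μ (tailQuantile μ t) < 1 := by
  rw [cdf_tailQuantile hμ ht]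
  exact sub_lt_self 1 (by positivity)

lemma paretoTransform_tailQuantile (hμ : Continuous (cdf μ)) (ht : 1 < t) :
    paretoTransform μ (tailQuantile μ t) = t := by
  rw [paretoTransform, cdf_tailQuantile hμ ht, sub_sub_cancel, one_div_one_div]

lemma measurable_paretoTransform (μ : Measure ℝ) : Measurable (paretoTransform μ) :=
  ((monotone_cdf μ).measurable.const_sub 1).const_div 1

variable [IsProbabilityMeasure μ]

lemma cdf_eq_measureReal_of_measurePreserving {Ω : Type*} [MeasurableSpace Ω] {P : Measure Ω}
    {Y : Ω → ℝ} (hY : MeasurePreserving Y P μ) (x : ℝ) : cdf μ x = P.real {ω | Y ω ≤ x} := by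
  rw [cdf_eq_real, ← hY.measureReal_preimage measurableSet_Iic.nullMeasurableSet]
  rfl

lemma nullSingletonClass_of_continuous_cdf (hμ : Continuous (cdf μ)) : NullSingletonClass μ where
  measure_singleton x := by
    have h_left : leftLim (cdf μ) x = cdf μ x := leftLim_eq_of_tendsto hμ.continuousWithinAt
    rw [← measure_cdf μ, StieltjesFunction.measure_singleton, h_left, sub_self,
      ENNReal.ofReal_zero]

lemma ae_cdf_ne (hμ : Continuous (cdf μ)) (p : ℝ) : ∀ᵐ x ∂μ, cdf μ x ≠ p := by
  have := nullSingletonClass_of_continuous_cdf hμ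
  refine ae_of_mem_of_ae_of_mem_inter_Ioo (s := {x | cdf μ x = p}) fun q r hq hr _ ↦ ?_
  have h_null : μ (Ioc q r) = 0 := by
    rw [← measure_cdf μ, StieltjesFunction.measure_Ioc, hq.trans hr.symm, sub_self,
      ENNReal.ofReal_zero]
  filter_upwards [measure_eq_zero_iff_ae_notMem.1 h_null] with x hx hx' using
    (hx (Ioo_subset_Ioc_self hx'.2)).elim

lemma ae_forall_lt_cdf_lt (hμ : Continuous (cdf μ)) :
    ∀ᵐ x ∂μ, ∀ y < x, cdf μ y < cdf μ x := by
  filter_upwards [ae_all_iff.2 fun q : ℚ ↦ ae_cdf_ne hμ (cdf μ q)] with x hx y hyx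
  obtain ⟨q, hyq, hqx⟩ := exists_rat_btwn hyx
  calc cdf μ y ≤ cdf μ q := monotone_cdf μ hyq.le
    _ < cdf μ x := (monotone_cdf μ hqx.le).lt_of_ne (hx q).symm

lemma ae_paretoTransform_pos (hμ : Continuous (cdf μ)) : ∀ᵐ x ∂μ, 0 < paretoTransform μ x := by
  filter_upwards [ae_cdf_ne hμ 1] with x hx
  exact one_div_pos.2 (sub_pos.2 ((cdf_le_one μ x).lt_of_ne hx))

lemma ae_tailQuantile_paretoTransform (hμ : Continuous (cdf μ)) :
    ∀ᵐ x ∂μ, tailQuantile μ (paretoTransform μ x) = x := by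
  filter_upwards [ae_forall_lt_cdf_lt hμ] with x hx
  rw [tailQuantile, paretoTransform, one_div_one_div, sub_sub_cancel]
  exact IsLeast.csInf_eq
    ⟨le_refl (cdf μ x), fun y hy ↦ le_of_not_gt fun hyx ↦ (hx y hyx).not_ge hy⟩

lemma ae_tailQuantile_lt_iff (hμ : Continuous (cdf μ)) (ht : 1 < t) :
    ∀ᵐ x ∂μ, tailQuantile μ t < x ↔ t < paretoTransform μ x := by
  filter_upwards [ae_forall_lt_cdf_lt hμ, ae_paretoTransform_pos hμ] with x hx hx_pos
  calc tailQuantile μ t < x ↔ cdf μ (tailQuantile μ t) < cdf μ x :=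
        ⟨hx _, (monotone_cdf μ).reflect_lt⟩
    _ ↔ 1 / paretoTransform μ x < 1 / t := by
        rw [cdf_tailQuantile hμ ht, paretoTransform, one_div_one_div, sub_lt_comm]
    _ ↔ t < paretoTransform μ x := one_div_lt_one_div hx_pos (by positivity)

end TailQuantile

/-- The paper's `𝕃₁`: the points of the positive orthant not dominated by `1`. -/
def exceedanceRegion (ι : Type*) : Set (ι → ℝ) := {x | (∀ j, 0 ≤ x j) ∧ ∃ j, 1 < x j}

section ExceedanceRegion

variable {ι : Type*}

lemma measurableSet_exceedanceRegion [Countable ι] : MeasurableSet (exceedanceRegion ι) := by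
  unfold exceedanceRegion
  measurability

lemma exceedanceRegion_subset : exceedanceRegion ι ⊆ {x | ∀ j, 0 ≤ x j} \ {0} := by
  rintro x ⟨hx, j, hj⟩
  refine ⟨hx, ?_⟩
  rintro rfl
  exact hj.not_ge zero_le_one

lemma zero_notMem_closure_exceedanceRegion [Finite ι] : 0 ∉ closure (exceedanceRegion ι) := by
  have h_open : IsOpen {x : ι → ℝ | ∀ j, x j < 1} := by
    simp only [ofPred_forall]
    exact isOpen_iInter_of_finite fun j ↦ isOpen_lt (continuous_apply j) continuous_const
  have h_disj : Disjoint {x : ι → ℝ | ∀ j, x j < 1} (exceedanceRegion ι) :=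
    disjoint_left.2 fun x hx hxL ↦ let ⟨j, hj⟩ := hxL.2; (hx j).not_gt hj
  exact disjoint_left.1 (h_disj.closure_right h_open) fun _ ↦ zero_lt_one

end ExceedanceRegion

/-- The Box-Cox transformation with parameter `ξ`, including its logarithmic limit at `ξ = 0`. -/
noncomputable def boxCox (ξ y : ℝ) : ℝ := if ξ = 0 then Real.log y else (y ^ ξ - 1) / ξ

lemma continuousOn_boxCox (ξ : ℝ) : ContinuousOn (boxCox ξ) (Ioi 0) := by
  refine continuousOn_of_forall_continuousAt fun y hy ↦ ?_
  have hy0 : y ≠ 0 := (mem_Ioi.1 hy).ne'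
  unfold boxCox
  split_ifs
  · exact Real.continuousAt_log hy0
  · exact ((Real.continuousAt_rpow_const y ξ (Or.inl hy0)).sub_const 1).div_const ξ

lemma measure_frontier_inter_eq_zero {E : Type*} [TopologicalSpace E] [MeasurableSpace E]
    {ν : Measure E} {L B : Set E} (hL : ν (frontier L) = 0) (hLB : ν (L ∩ frontier B) = 0) :
    ν (frontier (L ∩ B)) = 0 := by
  refine measure_mono_null (fun x hx ↦ ?_) (measure_union_null hL hLB)
  obtain ⟨hxL, -⟩ | ⟨hxL, hxB⟩ := frontier_inter_subset L B hx
  · exact Or.inl hxL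
  · rw [closure_eq_self_union_frontier] at hxL
    exact hxL.symm.imp_right fun hxL ↦ ⟨hxL, hxB⟩

/-- The increment `Q(t y) - Q(t)` in units of `a(t)`, whose limit in `t` defines extended regular
variation of `Q` with auxiliary function `a`. -/
noncomputable def normalizedIncrement (Q a : ℝ → ℝ) (t y : ℝ) : ℝ := (Q (t * y) - Q t) / a t

lemma tendsto_uncurry_normalizedIncrement {Q a φ : ℝ → ℝ} {r y : ℝ} (hQ : MonotoneOn Q (Ioi r))
    (ha : ∀ᶠ t in atTop, 0 < a t) (hφ : ContinuousOn φ (Ioi 0))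
    (hlim : ∀ y, 0 < y → Tendsto (normalizedIncrement Q a · y) atTop (𝓝 (φ y))) (hy : 0 < y) :
    Tendsto (uncurry (normalizedIncrement Q a)) (atTop ×ˢ 𝓝 y) (𝓝 (φ y)) := by
  refine tendsto_uncurry_of_monotoneOn (Ioi_mem_nhds (half_lt_self hy)) ?_
    (fun z hz ↦ hlim z ((half_pos hy).trans hz)) (hφ.continuousAt (Ioi_mem_nhds hy))
  filter_upwards [ha, eventually_gt_atTop 0,
    (tendsto_id.atTop_mul_const (half_pos hy)).eventually_gt_atTop r]
    with t hat ht htr z hz w hw hzw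
  have h_mem : ∀ u ∈ Ioi (y / 2), t * u ∈ Ioi r := fun u hu ↦
    htr.trans (mul_lt_mul_of_pos_left hu ht)
  have h_mono : Q (t * z) ≤ Q (t * w) :=
    hQ (h_mem z hz) (h_mem w hw) (mul_le_mul_of_nonneg_left hzw ht.le)
  exact div_le_div_of_nonneg_right (sub_le_sub_right h_mono _) hat.le

/-- Regular variation of `V` on `L` with exponent measure `ν`: the measures `t P(t⁻¹ V ∈ ·)`
converge, as `t → ∞`, to `ν` on the `ν`-continuity sets contained in `L`. -/
def RegularlyVaryingOn {Ω E : Type*} [MeasurableSpace Ω] [SMul ℝ E] [TopologicalSpace E]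
    [MeasurableSpace E] (P : Measure Ω) (V : Ω → E) (ν : Measure E) (L : Set E) : Prop :=
  ∀ B ⊆ L, MeasurableSet B → ν (frontier B) = 0 →
    Tendsto (fun t : ℝ ↦ t * P.real {ω | t⁻¹ • V ω ∈ B}) atTop (𝓝 (ν.real B))

namespace RegularlyVaryingOn

variable {Ω E κ : Type*} [MeasurableSpace Ω] [SMul ℝ E] [TopologicalSpace E] [MeasurableSpace E]
  {P : Measure Ω} {V : Ω → E} {ν : Measure E} {L : Set E}

lemma eventually_measure_ne_zero (hV : RegularlyVaryingOn P V ν L) (hL : MeasurableSet L)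
    (hL_bd : ν (frontier L) = 0) (hνL : ν.real L ≠ 0) :
    ∀ᶠ t : ℝ in atTop, P {ω | t⁻¹ • V ω ∈ L} ≠ 0 := by
  filter_upwards [(hV L subset_rfl hL hL_bd).eventually_ne hνL] with t ht h_null
  rw [measureReal_def, h_null, ENNReal.toReal_zero, mul_zero] at ht
  exact ht rfl

lemma tendstoInDistribution [TopologicalSpace.PseudoMetrizableSpace E] [OpensMeasurableSpace E]
    [MeasurableConstSMul ℝ E] {l : Filter κ} [l.IsCountablyGenerated] {τ : κ → ℝ}
    [∀ i, IsProbabilityMeasure (P[|{ω | (τ i)⁻¹ • V ω ∈ L}])] [IsProbabilityMeasure (ν[|L])]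
    (hV : RegularlyVaryingOn P V ν L) (hV_meas : Measurable V) (hL : MeasurableSet L)
    (hL_bd : ν (frontier L) = 0) (hτ : Tendsto τ l atTop) :
    TendstoInDistribution (fun i ω ↦ (τ i)⁻¹ • V ω) l id
      (fun i ↦ P[|{ω | (τ i)⁻¹ • V ω ∈ L}]) (ν[|L]) := by
  have hνL_top : ν L ≠ ⊤ := (ENNReal.toReal_ne_zero.1 (measureReal_ne_zero_of_cond (μ := ν))).2
  refine tendstoInDistribution_cond (c := τ) (fun i ↦ hV_meas.const_smul (τ i)⁻¹)
    fun B hB hB_bd ↦ ?_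
  have hLB_bd : ν (L ∩ frontier B) = 0 := by
    rw [cond_apply hL] at hB_bd
    exact (mul_eq_zero.1 hB_bd).resolve_left (ENNReal.inv_ne_zero.2 hνL_top)
  exact (hV _ inter_subset_left (hL.inter hB) (measure_frontier_inter_eq_zero hL_bd hLB_bd)).comp hτ

end RegularlyVaryingOn

lemma aemeasurable_pi_comp_of_continuousOn {ι : Type*} [Countable ι] {φ : ι → ℝ → ℝ}
    {m : Measure (ι → ℝ)} {s : Set ℝ} (hs : MeasurableSet s) (hφ : ∀ j, ContinuousOn (φ j) s)
    (hm : ∀ᵐ x ∂m, ∀ j, x j ∈ s) : AEMeasurable (fun x j ↦ φ j (x j)) m := by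
  refine aemeasurable_pi_lambda _ fun j ↦ ?_
  have h_mem : ∀ᵐ y ∂m.map (fun x ↦ x j), y ∈ s :=
    (mem_ae_map_iff (measurable_pi_apply j).aemeasurable hs).2 (hm.mono fun x hx ↦ hx j)
  have h_map : AEMeasurable (φ j) (m.map fun x ↦ x j) := by
    rw [← Measure.restrict_eq_self_of_ae_mem h_mem]
    exact (hφ j).aemeasurable hs
  exact h_map.comp_measurable (measurable_pi_apply j)

/-- The paper's `V`: the point `x` with each coordinate brought to the standard Pareto scale, the
`j`-th one by means of the law `μ j`. -/
noncomputable def paretoVector {ι : Type*} (μ : ι → Measure ℝ) (x : ι → ℝ) (j : ι) : ℝ :=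
  paretoTransform (μ j) (x j)

section Margins

variable {ι Ω : Type*} [MeasurableSpace Ω] {P : Measure Ω} {X : Ω → ι → ℝ}
  {μ : ι → Measure ℝ} {t : ℝ}

lemma measurable_paretoVector (hX : ∀ j, Measurable (X · j)) :
    Measurable fun ω ↦ paretoVector μ (X ω) :=
  measurable_pi_lambda _ fun j ↦ (measurable_paretoTransform (μ j)).comp (hX j)

variable [Countable ι]

lemma ae_forall_margin (hX : ∀ j, MeasurePreserving (X · j) P (μ j)) {p : ι → ℝ → Prop}
    (hp : ∀ j, ∀ᵐ x ∂μ j, p j x) : ∀ᵐ ω ∂P, ∀ j, p j (X ω j) :=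
  ae_all_iff.2 fun j ↦ (hX j).quasiMeasurePreserving.ae (hp j)

variable [∀ j, IsProbabilityMeasure (μ j)]

lemma exists_tailQuantile_lt_ae_eq (hX : ∀ j, MeasurePreserving (X · j) P (μ j))
    (hμ : ∀ j, Continuous (cdf (μ j))) (ht : 1 < t) :
    {ω | ∃ j, tailQuantile (μ j) t < X ω j}
      =ᵐ[P] {ω | t⁻¹ • paretoVector μ (X ω) ∈ exceedanceRegion ι} := by
  have ht0 : 0 < t := by positivity
  filter_upwards [ae_forall_margin hX fun j ↦ ae_paretoTransform_pos (hμ j),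
    ae_forall_margin hX fun j ↦ ae_tailQuantile_lt_iff (hμ j) ht] with ω hω_pos hω_lt
  have h_nonneg (j : ι) : 0 ≤ t⁻¹ * paretoVector μ (X ω) j :=
    mul_nonneg (inv_nonneg.2 ht0.le) (hω_pos j).le
  have h_lt (j : ι) : 1 < t⁻¹ * paretoVector μ (X ω) j ↔ tailQuantile (μ j) t < X ω j := by
    rw [lt_inv_mul_iff₀ ht0, mul_one, hω_lt j, paretoVector]
  exact propext ⟨fun ⟨j, hj⟩ ↦ ⟨h_nonneg, j, (h_lt j).2 hj⟩, fun ⟨_, j, hj⟩ ↦ ⟨j, (h_lt j).1 hj⟩⟩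

lemma normalizedIncrement_paretoVector_ae_eq (hX : ∀ j, MeasurePreserving (X · j) P (μ j))
    (hμ : ∀ j, Continuous (cdf (μ j))) (a : ι → ℝ → ℝ) (ht : t ≠ 0) :
    (fun ω j ↦ normalizedIncrement (tailQuantile (μ j)) (a j) t
      ((t⁻¹ • paretoVector μ (X ω)) j)) =ᵐ[P]
    fun ω j ↦ (X ω j - tailQuantile (μ j) t) / a j t := by
  filter_upwards [ae_forall_margin hX fun j ↦ ae_tailQuantile_paretoTransform (hμ j)] with ω hω
  funext j
  rw [normalizedIncrement, Pi.smul_apply, smul_eq_mul, mul_inv_cancel_left₀ ht, paretoVector, hω]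

lemma ae_cond_exceedanceRegion_pos {ν : Measure (ι → ℝ)}
    (hν : ν (exceedanceRegion ι ∩ {x | ∃ j, x j = 0}) = 0) :
    ∀ᵐ x ∂ν[|exceedanceRegion ι], ∀ j, 0 < x j := by
  have h_null : ∀ᵐ x ∂ν[|exceedanceRegion ι], x ∉ exceedanceRegion ι ∩ {x | ∃ j, x j = 0} :=
    cond_absolutelyContinuous.ae_le (measure_eq_zero_iff_ae_notMem.1 hν)
  filter_upwards [h_null, ae_cond_mem measurableSet_exceedanceRegion] with x hx hxL j
  exact (hxL.1 j).lt_of_ne' fun hj ↦ hx ⟨hxL, j, hj⟩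

end Margins

section ThresholdExcess

variable {ι Ω : Type*} [Countable ι] [MeasurableSpace Ω] {P : Measure Ω} {X : Ω → ι → ℝ}
  {μ : ι → Measure ℝ} [∀ j, IsProbabilityMeasure (μ j)] {ν : Measure (ι → ℝ)} {L : Set (ι → ℝ)}
  {a φ : ι → ℝ → ℝ}

lemma tendstoInDistribution_normalizedExcess {κ : Type*} {l : Filter κ} [l.IsCountablyGenerated]
    {τ : κ → ℝ} [∀ i, IsProbabilityMeasure (P[|{ω | (τ i)⁻¹ • paretoVector μ (X ω) ∈ L}])]
    [IsProbabilityMeasure (ν[|L])]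
    (hX : ∀ j, MeasurePreserving (X · j) P (μ j)) (hμ : ∀ j, Continuous (cdf (μ j)))
    (hV : RegularlyVaryingOn P (fun ω ↦ paretoVector μ (X ω)) ν L)
    (hL : MeasurableSet L) (hL_bd : ν (frontier L) = 0) (hL_pos : ∀ᵐ x ∂ν[|L], ∀ j, 0 < x j)
    (ha : ∀ j, ∀ᶠ t in atTop, 0 < a j t) (hφ : ∀ j, ContinuousOn (φ j) (Ioi 0))
    (hmarg : ∀ j y, 0 < y →
      Tendsto (normalizedIncrement (tailQuantile (μ j)) (a j) · y) atTop (𝓝 (φ j y)))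
    (hτ : Tendsto τ l atTop) (hτ0 : ∀ i, τ i ≠ 0) :
    TendstoInDistribution (fun i ω j ↦ (X ω j - tailQuantile (μ j) (τ i)) / a j (τ i)) l
      (fun x j ↦ φ j (x j)) (fun i ↦ P[|{ω | (τ i)⁻¹ • paretoVector μ (X ω) ∈ L}]) (ν[|L]) := by
  let f (i : κ) (y : ι → ℝ) (j : ι) : ℝ :=
    normalizedIncrement (tailQuantile (μ j)) (a j) (τ i) (y j)
  let Z (i : κ) (ω : Ω) : ι → ℝ := (τ i)⁻¹ • paretoVector μ (X ω)
  let Y (i : κ) (ω : Ω) (j : ι) : ℝ := (X ω j - tailQuantile (μ j) (τ i)) / a j (τ i)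
  have hfZ (i : κ) : f i ∘ Z i =ᵐ[P[|{ω | (τ i)⁻¹ • paretoVector μ (X ω) ∈ L}]] Y i :=
    cond_absolutelyContinuous.ae_le (normalizedIncrement_paretoVector_ae_eq hX hμ a (hτ0 i))
  have hY (i : κ) : Measurable (Y i) :=
    measurable_pi_lambda _ fun j ↦ ((hX j).measurable.sub_const _).div_const _
  have h_cont : ∀ᵐ y ∂ν[|L], Tendsto (uncurry f) (l ×ˢ 𝓝 y) (𝓝 fun j ↦ φ j (y j)) := by
    filter_upwards [hL_pos] with y hy
    exact tendsto_uncurry_pi (fun j ↦ tendsto_uncurry_normalizedIncrement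
      (monotoneOn_tailQuantile (μ j)) (ha j) (hφ j) (hmarg j) (hy j)) hτ
  have hZ : TendstoInDistribution Z l id
      (fun i ↦ P[|{ω | (τ i)⁻¹ • paretoVector μ (X ω) ∈ L}]) (ν[|L]) :=
    hV.tendstoInDistribution (measurable_paretoVector fun j ↦ (hX j).measurable) hL hL_bd hτ
  exact (tendstoInDistribution_comp_of_tendsto_uncurry (g := fun (x : ι → ℝ) j ↦ φ j (x j)) hZ
    (fun i ↦ (hY i).aemeasurable.congr (hfZ i).symm)
    (aemeasurable_pi_comp_of_continuousOn measurableSet_Ioi hφ hL_pos) h_cont).congr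
    hfZ (ae_eq_refl _)

lemma tendsto_integral_normalizedExcess [IsFiniteMeasure P]
    (hX : ∀ j, MeasurePreserving (X · j) P (μ j)) (hμ : ∀ j, Continuous (cdf (μ j)))
    (hV : RegularlyVaryingOn P (fun ω ↦ paretoVector μ (X ω)) ν L)
    (hL : MeasurableSet L) (hL_bd : ν (frontier L) = 0) (hνL : ν.real L ≠ 0)
    (hL_pos : ∀ᵐ x ∂ν[|L], ∀ j, 0 < x j)
    (ha : ∀ j, ∀ᶠ t in atTop, 0 < a j t) (hφ : ∀ j, ContinuousOn (φ j) (Ioi 0))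
    (hmarg : ∀ j y, 0 < y →
      Tendsto (normalizedIncrement (tailQuantile (μ j)) (a j) · y) atTop (𝓝 (φ j y)))
    (h : BoundedContinuousFunction (ι → ℝ) ℝ) :
    Tendsto (fun t ↦ ∫ ω, h (fun j ↦ (X ω j - tailQuantile (μ j) t) / a j t)
        ∂P[|{ω | t⁻¹ • paretoVector μ (X ω) ∈ L}]) atTop
      (𝓝 (∫ x, h (fun j ↦ φ j (x j)) ∂ν[|L])) := by
  -- The conditioning is proper only for large `t`, so the net is indexed by `Ioi T`.
  obtain ⟨T, hT⟩ := ((hV.eventually_measure_ne_zero hL hL_bd hνL).and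
    (eventually_ne_atTop 0)).exists_forall_of_atTop
  have (t : Ioi T) : IsProbabilityMeasure (P[|{ω | t.1⁻¹ • paretoVector μ (X ω) ∈ L}]) :=
    cond_isProbabilityMeasure (hT t t.2.le).1
  have : IsProbabilityMeasure (ν[|L]) :=
    have ⟨h0, h_top⟩ := ENNReal.toReal_ne_zero.1 hνL
    cond_isProbabilityMeasure_of_finite h0 h_top
  have h_dist := tendstoInDistribution_normalizedExcess (τ := ((↑) : Ioi T → ℝ)) hX hμ hV hL hL_bd
    hL_pos ha hφ hmarg (tendsto_comp_val_Ioi_atTop.2 tendsto_id) fun t ↦ (hT t t.2.le).2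
  rw [← tendsto_comp_val_Ioi_atTop (a := T)]
  exact tendsto_integral_of_tendstoInDistribution h_dist h

lemma tendsto_integral_normalizedExcess_of_exists_tailQuantile_lt [IsFiniteMeasure P]
    (hX : ∀ j, MeasurePreserving (X · j) P (μ j)) (hμ : ∀ j, Continuous (cdf (μ j)))
    (hV : RegularlyVaryingOn P (fun ω ↦ paretoVector μ (X ω)) ν (exceedanceRegion ι))
    (hν_bd : ν (frontier (exceedanceRegion ι)) = 0) (hν : ν.real (exceedanceRegion ι) ≠ 0)
    (hν_zero : ν (exceedanceRegion ι ∩ {x | ∃ j, x j = 0}) = 0)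
    (ha : ∀ j, ∀ᶠ t in atTop, 0 < a j t) (hφ : ∀ j, ContinuousOn (φ j) (Ioi 0))
    (hmarg : ∀ j y, 0 < y →
      Tendsto (normalizedIncrement (tailQuantile (μ j)) (a j) · y) atTop (𝓝 (φ j y)))
    (h : BoundedContinuousFunction (ι → ℝ) ℝ) :
    Tendsto (fun t ↦ ∫ ω, h (fun j ↦ (X ω j - tailQuantile (μ j) t) / a j t)
        ∂P[|{ω | ∃ j, tailQuantile (μ j) t < X ω j}]) atTop
      (𝓝 (∫ x, h (fun j ↦ φ j (x j)) ∂ν[|exceedanceRegion ι])) := by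
  refine (tendsto_integral_normalizedExcess hX hμ hV measurableSet_exceedanceRegion hν_bd hν
    (ae_cond_exceedanceRegion_pos hν_zero) ha hφ hmarg h).congr' ?_
  filter_upwards [eventually_gt_atTop 1] with t ht
  rw [cond_congr_set (exists_tailQuantile_lt_ae_eq hX hμ ht)]

end ThresholdExcess

theorem mgp_weak_convergence_threshold_curve_general
    {ι Ω : Type*} [Countable ι] [MeasurableSpace Ω] (P : Measure Ω) [IsProbabilityMeasure P]
    (X : Ω → ι → ℝ) (hX : Measurable X)
    (F : ι → ℝ → ℝ) (hFdef : ∀ j x, F j x = (P {ω | X ω j ≤ x}).toReal)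
    (hFcont : ∀ j, Continuous (F j))
    (V : Ω → ι → ℝ) (hVdef : ∀ ω j, V ω j = 1 / (1 - F j (X ω j)))
    (ν : Measure (ι → ℝ)) (hνL : (ν (exceedanceRegion ι)).toReal ≠ 0)
    (hν_bd : ν (frontier (exceedanceRegion ι)) = 0)
    (hν_zero : ν (exceedanceRegion ι ∩ {x | ∃ j, x j = 0}) = 0)
    (hconv : RegularlyVaryingOn P V ν (exceedanceRegion ι))
    (φ : ι → ℝ → ℝ) (hφ : ∀ j, ContinuousOn (φ j) (Ioi 0))
    (a : ι → ℝ → ℝ) (ha : ∀ j, ∀ᶠ t in atTop, 0 < a j t)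
    (b : ι → ℝ → ℝ) (hb : ∀ j t, b j t = sInf {x : ℝ | 1 - 1 / t ≤ F j x})
    (hmarg : ∀ j, ∀ y : ℝ, 0 < y →
      Tendsto (fun t ↦ (b j (t * y) - b j t) / a j t) atTop (𝓝 (φ j y)))
    (σ : ι → ℝ → ℝ) (hσ : ∀ j, ∀ u : ℝ, F j u < 1 → σ j u = a j (1 / (1 - F j u)))
    (h : BoundedContinuousFunction (ι → ℝ) ℝ) :
    Tendsto (fun t : ℝ ↦
        (∫ ω in {ω | ∃ j, b j t < X ω j}, h (fun j ↦ (X ω j - b j t) / σ j (b j t)) ∂P) /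
          (P {ω | ∃ j, b j t < X ω j}).toReal)
      atTop
      (𝓝 ((∫ x in exceedanceRegion ι, h (fun j ↦ φ j (x j)) ∂ν) /
        (ν (exceedanceRegion ι)).toReal)) := by
  let μ (j : ι) : Measure ℝ := P.map (X · j)
  have hXμ (j : ι) : MeasurePreserving (X · j) P (μ j) := ⟨hX.eval, rfl⟩
  have (j : ι) : IsProbabilityMeasure (μ j) :=
    Measure.isProbabilityMeasure_map (hXμ j).measurable.aemeasurable
  obtain rfl : F = fun j ↦ ⇑(cdf (μ j)) := by
    funext j x
    exact (hFdef j x).trans (cdf_eq_measureReal_of_measurePreserving (hXμ j) x).symm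
  obtain rfl : V = fun ω ↦ paretoVector μ (X ω) := funext₂ hVdef
  obtain rfl : b = fun j ↦ tailQuantile (μ j) := funext₂ hb
  have h_lim := tendsto_integral_normalizedExcess_of_exists_tailQuantile_lt hXμ hFcont hconv
    hν_bd hνL hν_zero ha hφ hmarg h
  simp only [integral_cond, smul_eq_mul, inv_mul_eq_div] at h_lim
  refine h_lim.congr' ?_
  filter_upwards [eventually_gt_atTop 1] with t ht
  have h_scale (j : ι) : σ j (tailQuantile (μ j) t) = a j t := by
    rw [hσ j _ (cdf_tailQuantile_lt_one (hFcont j) ht)]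
    exact congrArg (a j) (paretoTransform_tailQuantile (hFcont j) ht)
  simp only [h_scale, measureReal_def]

end

/-- Proposition 1, consequence along the threshold curve: with `σ_j(u) = a_j(1/(1 - F_j(u)))`,
the conditional law of `((X_j - b_j(t))/σ_j(b_j(t)))_j` given `X ≰ b(t)` converges weakly to the
law of `((Y_j^{ξ_j} - 1)/ξ_j)_j` where `Y` has law `ν(· ∩ 𝕃₁)/ν(𝕃₁)`. -/
theorem mgp_weak_convergence_threshold_curve
    {d : ℕ} {Ω : Type*} [MeasurableSpace Ω] (ℙ : Measure Ω) [IsProbabilityMeasure ℙ]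
    (X : Ω → Fin d → ℝ) (hX : Measurable X)
    (F : Fin d → ℝ → ℝ)
    (hFdef : ∀ j x, F j x = (ℙ {ω | X ω j ≤ x}).toReal)
    (hFcont : ∀ j, Continuous (F j))
    (V : Ω → Fin d → ℝ) (hVdef : ∀ ω j, V ω j = 1 / (1 - F j (X ω j)))
    (ν : Measure (Fin d → ℝ))
    (hfin : ∀ B : Set (Fin d → ℝ), MeasurableSet B →
      B ⊆ {x | ∀ j, 0 ≤ x j} \ {0} → (0 : Fin d → ℝ) ∉ closure B → ν B < ⊤)
    (hconv : ∀ B : Set (Fin d → ℝ), MeasurableSet B →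
      B ⊆ {x | ∀ j, 0 ≤ x j} \ {0} → (0 : Fin d → ℝ) ∉ closure B → ν (frontier B) = 0 →
      Tendsto (fun t : ℝ => t * (ℙ {ω | t⁻¹ • V ω ∈ B}).toReal) atTop (nhds (ν B).toReal))
    (L1 : Set (Fin d → ℝ)) (hL1 : L1 = {x | (∀ j, 0 ≤ x j) ∧ ∃ j, 1 < x j})
    (hpos : 0 < ν L1) (hbd : ν (frontier L1) = 0)
    (hzero : ν {x : Fin d → ℝ | (∀ j, 0 ≤ x j) ∧ x ≠ 0 ∧ ∃ j, x j = 0} = 0)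
    (ξ : Fin d → ℝ) (a : Fin d → ℝ → ℝ) (ha : ∀ j, ∀ t : ℝ, 1 < t → 0 < a j t)
    (b : Fin d → ℝ → ℝ) (hb : ∀ j t, b j t = sInf {x : ℝ | 1 - 1 / t ≤ F j x})
    (hmarg : ∀ j, ∀ y : ℝ, 0 < y →
      Tendsto (fun t : ℝ => (b j (t * y) - b j t) / a j t) atTop
        (nhds (if ξ j = 0 then Real.log y else (y ^ ξ j - 1) / ξ j)))
    -- the scaling function σ_j(u) = a_j(1/(1 - F_j(u))) for u with F_j(u) < 1
    (σ : Fin d → ℝ → ℝ)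
    (hσ : ∀ j, ∀ u : ℝ, F j u < 1 → σ j u = a j (1 / (1 - F j u))) :
    ∀ h : BoundedContinuousFunction (Fin d → ℝ) ℝ,
      Tendsto (fun t : ℝ =>
          (∫ ω in {ω | ∃ j, b j t < X ω j},
              h (fun j => (X ω j - b j t) / σ j (b j t)) ∂ℙ) /
            (ℙ {ω | ∃ j, b j t < X ω j}).toReal)
        atTop
        (nhds ((∫ x in L1,
            h (fun j => if ξ j = 0 then Real.log (x j) else (x j ^ ξ j - 1) / ξ j) ∂ν) /
          (ν L1).toReal)) := by
  subst hL1
  have hν_zero : ν (exceedanceRegion (Fin d) ∩ {x | ∃ j, x j = 0}) = 0 := by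
    refine measure_mono_null (fun x hx ↦ ?_) hzero
    exact ⟨hx.1.1, (exceedanceRegion_subset hx.1).2, hx.2⟩
  have hν_top : ν (exceedanceRegion (Fin d)) < ⊤ := hfin _ measurableSet_exceedanceRegion
    exceedanceRegion_subset zero_notMem_closure_exceedanceRegion
  have hV : RegularlyVaryingOn ℙ V ν (exceedanceRegion (Fin d)) := fun B hBL hB hB_bd ↦
    hconv B hB (hBL.trans exceedanceRegion_subset)
      (notMem_subset (closure_mono hBL) zero_notMem_closure_exceedanceRegion) hB_bd
  exact mgp_weak_convergence_threshold_curve_general ℙ X hX F hFdef hFcont V hVdef ν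
    (ENNReal.toReal_ne_zero.2 ⟨hpos.ne', hν_top.ne⟩) hbd hν_zero hV
    (fun j ↦ boxCox (ξ j)) (fun j ↦ continuousOn_boxCox (ξ j)) a
    (fun j ↦ (eventually_gt_atTop 1).mono (ha j)) b hb hmarg σ hσ
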